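/- arXiv:0906.4152 — 3 statements merged into one kernel-verified Lean document; each statement's English description precedes it below -/
import Mathlib

section
/- Let I_M ⊆ ℚ[x,y,z] be the ideal generated by x⁴, g₃ = 2z³ − (6x+9y)z² + (15y²+20xy+12x²)z − 8y³ − 16xy² − 16x²y, g₄ = (y³+2xy²+4x²y+8x³)z, and g₆ = y⁶+4xy⁵+10x²y⁴+20x³y³. Then x³y⁵ ∉ I_M. -/
open MvPolynomial

/-- The variable `x` in `ℚ[x,y,z]`. -/
noncomputable def x : MvPolynomial (Fin 3) ℚ := X 0
/-- The variable `y` in `ℚ[x,y,z]`. -/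
noncomputable def y : MvPolynomial (Fin 3) ℚ := X 1
/-- The variable `z` in `ℚ[x,y,z]`. -/
noncomputable def z : MvPolynomial (Fin 3) ℚ := X 2

/-- `g₃ = 2z³ − (6x+9y)z² + (15y²+20xy+12x²)z − 8y³ − 16xy² − 16x²y`. -/
noncomputable def g₃ : MvPolynomial (Fin 3) ℚ :=
  2*z^3 - (6*x + 9*y)*z^2 + (15*y^2 + 20*x*y + 12*x^2)*z
    - 8*y^3 - 16*x*y^2 - 16*x^2*y
/-- `g₄ = (y³+2xy²+4x²y+8x³)z`. -/
noncomputable def g₄ : MvPolynomial (Fin 3) ℚ :=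
  (y^3 + 2*x*y^2 + 4*x^2*y + 8*x^3)*z
/-- `g₆ = y⁶+4xy⁵+10x²y⁴+20x³y³`. -/
noncomputable def g₆ : MvPolynomial (Fin 3) ℚ :=
  y^6 + 4*x*y^5 + 10*x^2*y^4 + 20*x^3*y^3

/-- The ideal `I_M = ⟨x⁴, g₃, g₄, g₆⟩` presenting `H^*(M~;ℚ)`, the rational
cohomology of the variety of complete conics on `ℙ³`. -/
noncomputable def I_M : Ideal (MvPolynomial (Fin 3) ℚ) :=
  Ideal.span {x^4, g₃, g₄, g₆}

/-!
`I_M` has the shape of the presentation of the cohomology of a blow-up. Over `S = ℚ[x]/(x⁴)`, the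
cohomology of the dual projective space, `S[y]/(g₆)` is that of the bundle of plane conics,
`p = y³ + 2xy² + 4x²y + 8x³` generates the relations on the bundle of Veronese surfaces, and `z` is
the exceptional class of the blow-up along it. The constant term `q` in `z` of `g₃` is `-2`
times the class of the centre, and `p * q = -8 * g₆` in `S[y]`.

If `r ∈ S[y]` lies in `(g₃, p * z)`, say `r = b * g₃ + c * p * z`, then modulo `p` a multiple of
`g₃` is constant in `z`. As the leading coefficient of `g₃` is a unit, `p` divides `b`, and
setting `z = 0` shows that `p * q` divides `r`. So `x³y⁵ ∈ I_M` would make `g₆`, which is monic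
of degree `6` in `y`, divide `x³y⁵` in `S[y]`, forcing `x³ = 0` in `S`.
-/

open scoped Polynomial

section ContractionToConstants

variable {R : Type*} [CommRing R]

lemma eq_zero_of_mul_eq_C {f g : R[X]} {r : R} (hg : IsUnit g.leadingCoeff)
    (hdeg : 0 < g.natDegree) (h : f * g = Polynomial.C r) : f = 0 := by
  by_contra hf
  have hlead : f.leadingCoeff * g.leadingCoeff ≠ 0 := by
    rwa [Ne, hg.mul_left_eq_zero, Polynomial.leadingCoeff_eq_zero]
  have hnat := Polynomial.natDegree_mul' hlead
  rw [h, Polynomial.natDegree_C] at hnat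
  lia

lemma C_dvd_of_C_dvd_mul_sub_C {p r : R} {f g : R[X]} (hg : IsUnit g.leadingCoeff)
    (hdeg : 0 < g.natDegree) (h : Polynomial.C p ∣ f * g - Polynomial.C r) :
    Polynomial.C p ∣ f := by
  let π := Ideal.Quotient.mk (Ideal.span {p})
  have C_dvd_iff (k : R[X]) : Polynomial.C p ∣ k ↔ k.map π = 0 := by
    simp only [Polynomial.C_dvd_iff_dvd_coeff, Polynomial.ext_iff, Polynomial.coeff_map,
      Polynomial.coeff_zero, π, Ideal.Quotient.eq_zero_iff_dvd]
  rw [C_dvd_iff] at h ⊢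
  by_contra hf
  have : Nontrivial (R ⧸ Ideal.span {p}) := Polynomial.nontrivial_iff.mp ⟨_, _, hf⟩
  have hlead : π g.leadingCoeff ≠ 0 := (hg.map π).ne_zero
  refine hf (eq_zero_of_mul_eq_C (g := g.map π) (r := π r) ?_ ?_ ?_)
  · rw [Polynomial.leadingCoeff_map_of_leadingCoeff_ne_zero π hlead]
    exact hg.map π
  · rwa [Polynomial.natDegree_map_of_leadingCoeff_ne_zero π hlead]
  · rwa [Polynomial.map_sub, Polynomial.map_mul, Polynomial.map_C, sub_eq_zero] at h

theorem C_mem_span_pair_C_mul_X_iff {p r : R} {g : R[X]} (hg : IsUnit g.leadingCoeff)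
    (hdeg : 0 < g.natDegree) :
    Polynomial.C r ∈ Ideal.span {g, Polynomial.C p * Polynomial.X} ↔ p * g.coeff 0 ∣ r := by
  rw [Ideal.mem_span_pair]
  constructor
  · rintro ⟨f, k, h⟩
    obtain ⟨f, rfl⟩ : Polynomial.C p ∣ f :=
      C_dvd_of_C_dvd_mul_sub_C hg hdeg ⟨-(k * Polynomial.X), by rw [← h]; ring⟩
    refine ⟨f.coeff 0, ?_⟩
    have hcoeff := congrArg (Polynomial.coeff · 0) h
    simp only [Polynomial.coeff_add, Polynomial.mul_coeff_zero, Polynomial.coeff_C_zero,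
      Polynomial.coeff_X_zero, mul_zero, add_zero] at hcoeff
    rw [← hcoeff]
    ring
  · rintro ⟨s, rfl⟩
    refine ⟨Polynomial.C (s * p), -(Polynomial.C s * g.divX), ?_⟩
    nth_rw 1 [← g.divX_mul_X_add]
    simp only [Polynomial.C_mul]
    ring

end ContractionToConstants

section BlowUpRelations

variable {R : Type*} [CommRing R]

/-- The polynomial `g₆` evaluated at `x = a`, `y = b`: the relation presenting the bundle of plane
conics over the dual projective space. -/
def conicBundleRel (a b : R) : R :=
  b ^ 6 + 4 * a * b ^ 5 + 10 * a ^ 2 * b ^ 4 + 20 * a ^ 3 * b ^ 3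

/-- The cofactor of `z` in `g₄`, evaluated at `x = a`, `y = b`: the relation satisfied by `y` on
the bundle of Veronese surfaces of double lines. -/
def veroneseRel (a b : R) : R :=
  b ^ 3 + 2 * a * b ^ 2 + 4 * a ^ 2 * b + 8 * a ^ 3

/-- The class `4y³ + 8xy² + 8x²y` of the bundle of Veronese surfaces in the bundle of plane conics,
evaluated at `x = a`, `y = b`; the constant term of `g₃` in `z` is `-2` times it. -/
def veroneseClass (a b : R) : R :=
  4 * b ^ 3 + 8 * a * b ^ 2 + 8 * a ^ 2 * b

/-- The polynomial `g₃` as a polynomial in `z`, with coefficients evaluated at `x = a`, `y = b`: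
the relation satisfied by the exceptional class `z`. -/
noncomputable def exceptionalRel (a b : R) : R[X] :=
  Polynomial.C 2 * Polynomial.X ^ 3 + Polynomial.C (-(6 * a + 9 * b)) * Polynomial.X ^ 2
    + Polynomial.C (15 * b ^ 2 + 20 * a * b + 12 * a ^ 2) * Polynomial.X
    + Polynomial.C (-2 * veroneseClass a b)

lemma veroneseRel_mul_veroneseClass {a : R} (ha : a ^ 4 = 0) (b : R) :
    veroneseRel a b * veroneseClass a b = 4 * conicBundleRel a b := by
  rw [veroneseRel, veroneseClass, conicBundleRel]
  linear_combination (96 * b ^ 2 + 64 * a * b) * ha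

lemma coeff_zero_exceptionalRel (a b : R) :
    (exceptionalRel a b).coeff 0 = -2 * veroneseClass a b := by
  simp [exceptionalRel]

variable [Algebra ℚ R]

/-- The homomorphism `ℚ[x,y,z] → R[z]` sending `x` and `y` to the constants `a` and `b`. -/
noncomputable def specializeXY (a b : R) : MvPolynomial (Fin 3) ℚ →ₐ[ℚ] R[X] :=
  aeval ![Polynomial.C a, Polynomial.C b, Polynomial.X]

lemma specializeXY_x (a b : R) : specializeXY a b x = Polynomial.C a := by
  simp [specializeXY, x]

lemma specializeXY_y (a b : R) : specializeXY a b y = Polynomial.C b := by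
  simp [specializeXY, y]

lemma specializeXY_z (a b : R) : specializeXY a b z = Polynomial.X := by
  simp [specializeXY, z]

lemma specializeXY_g₃ (a b : R) : specializeXY a b g₃ = exceptionalRel a b := by
  simp only [g₃, exceptionalRel, veroneseClass, map_add, map_sub, map_neg, map_mul, map_pow,
    map_ofNat, specializeXY_x, specializeXY_y, specializeXY_z]
  ring

lemma specializeXY_g₄ (a b : R) :
    specializeXY a b g₄ = Polynomial.C (veroneseRel a b) * Polynomial.X := by
  simp only [g₄, veroneseRel, map_add, map_mul, map_pow, map_ofNat, specializeXY_x,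
    specializeXY_y, specializeXY_z]

lemma specializeXY_g₆ (a b : R) : specializeXY a b g₆ = Polynomial.C (conicBundleRel a b) := by
  simp only [g₆, conicBundleRel, map_add, map_mul, map_pow, map_ofNat, specializeXY_x,
    specializeXY_y]

variable [Nontrivial R]

lemma natDegree_exceptionalRel (a b : R) : (exceptionalRel a b).natDegree = 3 := by
  have : CharZero R := algebraRat.charZero R
  exact Polynomial.natDegree_cubic two_ne_zero

lemma isUnit_leadingCoeff_exceptionalRel (a b : R) :
    IsUnit (exceptionalRel a b).leadingCoeff := by
  have : CharZero R := algebraRat.charZero R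
  rw [exceptionalRel, Polynomial.leadingCoeff_cubic two_ne_zero, ← map_ofNat (algebraMap ℚ R) 2]
  exact (IsUnit.mk0 _ two_ne_zero).map _

lemma C_mem_span_exceptionalRel_iff {a b r : R} (ha : a ^ 4 = 0) :
    Polynomial.C r ∈ Ideal.span {exceptionalRel a b, Polynomial.C (veroneseRel a b) * Polynomial.X}
      ↔ conicBundleRel a b ∣ r := by
  have hdeg : 0 < (exceptionalRel a b).natDegree := by
    rw [natDegree_exceptionalRel]
    norm_num
  have hmul : veroneseRel a b * (-2 * veroneseClass a b) = -8 * conicBundleRel a b := by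
    linear_combination -2 * veroneseRel_mul_veroneseClass ha b
  have isUnit_eight : IsUnit (8 : R) := by
    rw [← map_ofNat (algebraMap ℚ R) 8]
    exact (IsUnit.mk0 _ (by norm_num)).map _
  rw [C_mem_span_pair_C_mul_X_iff (isUnit_leadingCoeff_exceptionalRel a b) hdeg,
    coeff_zero_exceptionalRel, hmul, isUnit_eight.neg.mul_left_dvd]

lemma I_M_le_comap_specializeXY {a : R} (ha : a ^ 4 = 0) (b : R) :
    I_M ≤ (Ideal.span {exceptionalRel a b, Polynomial.C (veroneseRel a b) * Polynomial.X}).comap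
      (specializeXY a b) := by
  rw [I_M, Ideal.span_le]
  rintro _ (rfl | rfl | rfl | rfl) <;> rw [SetLike.mem_coe, Ideal.mem_comap]
  · rw [map_pow, specializeXY_x, ← map_pow, ha, map_zero]
    exact zero_mem _
  · rw [specializeXY_g₃]
    exact Ideal.subset_span (Set.mem_insert _ _)
  · rw [specializeXY_g₄]
    exact Ideal.subset_span (Set.mem_insert_of_mem _ rfl)
  · rw [specializeXY_g₆, C_mem_span_exceptionalRel_iff ha]

theorem conicBundleRel_dvd_of_x_pow_mul_y_pow_mem {a : R} (ha : a ^ 4 = 0) (b : R) {m n : ℕ}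
    (h : x ^ m * y ^ n ∈ I_M) : conicBundleRel a b ∣ a ^ m * b ^ n := by
  rw [← C_mem_span_exceptionalRel_iff ha]
  simpa only [Ideal.mem_comap, map_mul, map_pow, specializeXY_x, specializeXY_y] using
    I_M_le_comap_specializeXY ha b h

end BlowUpRelations

section PolynomialsInY

variable {S : Type*} [CommRing S] {e : S}

lemma monic_conicBundleRel_C_X (e : S) : (conicBundleRel (Polynomial.C e) Polynomial.X).Monic := by
  rw [conicBundleRel]
  monicity!

lemma natDegree_conicBundleRel_C_X [Nontrivial S] (e : S) :
    (conicBundleRel (Polynomial.C e) Polynomial.X).natDegree = 6 := by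
  rw [conicBundleRel]
  compute_degree!

lemma eq_zero_of_conicBundleRel_dvd_C_mul_X_pow {s : S} {n : ℕ} (hn : n < 6)
    (h : conicBundleRel (Polynomial.C e) Polynomial.X ∣ Polynomial.C s * Polynomial.X ^ n) :
    s = 0 := by
  nontriviality S
  by_contra hs
  refine (monic_conicBundleRel_C_X e).not_dvd_of_natDegree_lt ?_ ?_ h
  · simpa [Polynomial.C_mul_X_pow_eq_monomial] using hs
  · rwa [Polynomial.natDegree_C_mul_X_pow n s hs, natDegree_conicBundleRel_C_X]

theorem pow_eq_zero_of_x_pow_mul_y_pow_mem [Algebra ℚ S] (he : e ^ 4 = 0) {m n : ℕ} (hn : n < 6)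
    (h : x ^ m * y ^ n ∈ I_M) : e ^ m = 0 := by
  nontriviality S
  have hC : Polynomial.C e ^ 4 = 0 := by rw [← map_pow, he, map_zero]
  have hdvd := conicBundleRel_dvd_of_x_pow_mul_y_pow_mem hC Polynomial.X h
  rw [← map_pow] at hdvd
  exact eq_zero_of_conicBundleRel_dvd_C_mul_X_pow hn hdvd

end PolynomialsInY

lemma root_X_pow_pow_eq_zero_iff {R : Type*} [CommRing R] [Nontrivial R] {m n : ℕ} :
    AdjoinRoot.root (Polynomial.X ^ n : R[X]) ^ m = 0 ↔ n ≤ m := by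
  rw [← AdjoinRoot.mk_X, ← map_pow, AdjoinRoot.mk_eq_zero, Polynomial.X_pow_dvd_iff]
  simp only [Polynomial.coeff_X_pow, ite_eq_right_iff, one_ne_zero]
  exact ⟨fun h => not_lt.mp fun hm => h m hm rfl, fun h d hd hdm => by lia⟩

/-- `x³y⁵ ∉ I_M`: the top characteristic `∫ x³y⁵ = 1` is nonzero. -/
theorem x3y5_not_mem : x^3*y^5 ∉ I_M := by
  intro hmem
  have root_pow_four : AdjoinRoot.root (Polynomial.X ^ 4 : ℚ[X]) ^ 4 = 0 :=
    root_X_pow_pow_eq_zero_iff.mpr le_rfl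
  have root_pow_three := pow_eq_zero_of_x_pow_mul_y_pow_mem root_pow_four (by norm_num) hmem
  exact absurd (root_X_pow_pow_eq_zero_iff.mp root_pow_three) (by norm_num)
end

section
/- Let I_M ⊆ ℚ[x,y,z] be the ideal generated by x⁴, g₃ = 2z³ − (6x+9y)z² + (15y²+20xy+12x²)z − 8y³ − 16xy² − 16x²y, g₄ = (y³+2xy²+4x²y+8x³)z, and g₆ = y⁶+4xy⁵+10x²y⁴+20x³y³. Then the following twelve degree-16 monomials all belong to I_M: x³y⁴z, x²y⁵z, xy⁶z, y⁷z, x³y³z², x²y⁴z², xy⁵z², y⁶z², xy⁴z³, y⁵z³, y⁴z⁴, and x²z⁶. -/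
open MvPolynomial

/-!
Modulo `x⁴` the relation `g₄` gives `y⁴z = 0`, because
`(y - 2x)(y³ + 2xy² + 4x²y + 8x³) = y⁴ - 16x⁴`, and multiplied by `x³` it gives `x³y³z = 0`.
Every listed monomial except `x²z⁶` is a multiple of one of these two.

For `x²z⁶`, use `g₃` to rewrite `2z³` in terms of lower powers of `z`. Recursively this expresses
the monomials of polynomial degree 8 as multiples of `x³y⁵`, first those divisible by `x³` and then
those divisible by `x²`; in units of `x³y⁵` the nonzero values needed are

* `x³y²z³ = 4`, `x³yz⁴ = 18`, `x³z⁵ = 51`;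
* `x²y⁶ = -4`, `x²y³z³ = -8`, `x²y²z⁴ = -24`, `x²yz⁵ = -34`.

With these values the terms of the recursion for `2x²z⁶` cancel.
-/

/-- The relations `x⁴ = g₃ = g₄ = g₆ = 0` imposed on elements `a, b, c` of an arbitrary commutative
ring in place of `x, y, z`. Such a triple is the same as a ring homomorphism from
`ℤ[x,y,z] / ⟨x⁴, g₃, g₄, g₆⟩`, so identities derived from the relations can be read in
`ℚ[x,y,z] / I_M`. -/
structure CompleteConicRelations {A : Type*} [CommRing A] (a b c : A) : Prop where
  pow_four : a^4 = 0
  cubic : 2*c^3 - (6*a + 9*b)*c^2 + (15*b^2 + 20*a*b + 12*a^2)*c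
    - 8*b^3 - 16*a*b^2 - 16*a^2*b = 0
  quartic : (b^3 + 2*a*b^2 + 4*a^2*b + 8*a^3)*c = 0
  sextic : b^6 + 4*a*b^5 + 10*a^2*b^4 + 20*a^3*b^3 = 0

namespace CompleteConicRelations

variable {A : Type*} [CommRing A] {a b c : A}

theorem b_pow_four_mul_c (h : CompleteConicRelations a b c) : b^4*c = 0 := by
  linear_combination (b - 2*a)*h.quartic + 16*c*h.pow_four

theorem a_cube_mul_b_cube_mul_c (h : CompleteConicRelations a b c) : a^3*b^3*c = 0 := by
  linear_combination a^3*h.quartic - (2*b^2 + 4*a*b + 8*a^2)*c*h.pow_four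

theorem two_mul_a_cube_mul_c_cube_mul (h : CompleteConicRelations a b c) (m : A) :
    2*(a^3*c^3*m) = a^3*(9*b*c^2 - 15*b^2*c + 8*b^3)*m := by
  linear_combination
    a^3*m*h.cubic + (6*c^2 - (20*b + 12*a)*c + 16*b^2 + 16*a*b)*m*h.pow_four

theorem two_mul_a_sq_mul_c_cube_mul (h : CompleteConicRelations a b c) (m : A) :
    2*(a^2*c^3*m) =
      a^2*((6*a + 9*b)*c^2 - (15*b^2 + 20*a*b)*c + 8*b^3 + 16*a*b^2)*m := by
  linear_combination a^2*m*h.cubic + (16*b - 12*c)*m*h.pow_four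

theorem a_cube_mul_b_sq_mul_c_cube (h : CompleteConicRelations a b c) (h2 : IsRegular (2 : A)) :
    a^3*b^2*c^3 = 4*(a^3*b^5) := by
  apply h2.left
  linear_combination h.two_mul_a_cube_mul_c_cube_mul (b^2)
    + (9*c - 15*b)*h.a_cube_mul_b_cube_mul_c

theorem a_cube_mul_b_mul_c_pow_four (h : CompleteConicRelations a b c)
    (h2 : IsRegular (2 : A)) : a^3*b*c^4 = 18*(a^3*b^5) := by
  apply h2.left
  linear_combination h.two_mul_a_cube_mul_c_cube_mul (b*c)
    + 9*h.a_cube_mul_b_sq_mul_c_cube h2 + (8*b - 15*c)*h.a_cube_mul_b_cube_mul_c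

theorem a_cube_mul_c_pow_five (h : CompleteConicRelations a b c) (h2 : IsRegular (2 : A)) :
    a^3*c^5 = 51*(a^3*b^5) := by
  apply h2.left
  linear_combination h.two_mul_a_cube_mul_c_cube_mul (c^2)
    + 9*h.a_cube_mul_b_mul_c_pow_four h2 - 15*h.a_cube_mul_b_sq_mul_c_cube h2
    + 8*c*h.a_cube_mul_b_cube_mul_c

theorem a_sq_mul_b_pow_six (h : CompleteConicRelations a b c) :
    a^2*b^6 = -4*(a^3*b^5) := by
  linear_combination a^2*h.sextic - (10*b^4 + 20*a*b^3)*h.pow_four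

theorem a_sq_mul_b_cube_mul_c_cube (h : CompleteConicRelations a b c)
    (h2 : IsRegular (2 : A)) : a^2*b^3*c^3 = -8*(a^3*b^5) := by
  apply h2.left
  linear_combination h.two_mul_a_sq_mul_c_cube_mul (b^3)
    + 8*h.a_sq_mul_b_pow_six + (9*a^2*c - 15*a^2*b)*h.b_pow_four_mul_c
    + (6*c - 20*b)*h.a_cube_mul_b_cube_mul_c

theorem a_sq_mul_b_sq_mul_c_pow_four (h : CompleteConicRelations a b c)
    (h2 : IsRegular (2 : A)) : a^2*b^2*c^4 = -24*(a^3*b^5) := by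
  apply h2.left
  linear_combination h.two_mul_a_sq_mul_c_cube_mul (b^2*c)
    + 6*h.a_cube_mul_b_sq_mul_c_cube h2 + 9*h.a_sq_mul_b_cube_mul_c_cube h2
    + (8*a^2*b - 15*a^2*c + 16*a^3)*h.b_pow_four_mul_c - 20*c*h.a_cube_mul_b_cube_mul_c

theorem a_sq_mul_b_mul_c_pow_five (h : CompleteConicRelations a b c)
    (h2 : IsRegular (2 : A)) : a^2*b*c^5 = -34*(a^3*b^5) := by
  apply h2.left
  linear_combination h.two_mul_a_sq_mul_c_cube_mul (b*c^2)
    + 6*h.a_cube_mul_b_mul_c_pow_four h2 + 9*h.a_sq_mul_b_sq_mul_c_pow_four h2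
    - 15*h.a_sq_mul_b_cube_mul_c_cube h2 - 20*h.a_cube_mul_b_sq_mul_c_cube h2
    + 8*a^2*c*h.b_pow_four_mul_c + 16*c*h.a_cube_mul_b_cube_mul_c

theorem a_sq_mul_c_pow_six (h : CompleteConicRelations a b c) (h2 : IsRegular (2 : A)) :
    a^2*c^6 = 0 := by
  apply h2.left
  linear_combination h.two_mul_a_sq_mul_c_cube_mul (c^3)
    + 6*h.a_cube_mul_c_pow_five h2 + 9*h.a_sq_mul_b_mul_c_pow_five h2
    - 15*h.a_sq_mul_b_sq_mul_c_pow_four h2 - 20*h.a_cube_mul_b_mul_c_pow_four h2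
    + 8*h.a_sq_mul_b_cube_mul_c_cube h2 + 16*h.a_cube_mul_b_sq_mul_c_cube h2

end CompleteConicRelations

theorem completeConicRelations_mk_I_M :
    CompleteConicRelations (Ideal.Quotient.mk I_M x) (Ideal.Quotient.mk I_M y)
      (Ideal.Quotient.mk I_M z) where
  pow_four := Ideal.Quotient.eq_zero_iff_mem.mpr (Ideal.subset_span (by simp) : x^4 ∈ I_M)
  cubic := Ideal.Quotient.eq_zero_iff_mem.mpr (Ideal.subset_span (by simp) : g₃ ∈ I_M)
  quartic := Ideal.Quotient.eq_zero_iff_mem.mpr (Ideal.subset_span (by simp) : g₄ ∈ I_M)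
  sextic := Ideal.Quotient.eq_zero_iff_mem.mpr (Ideal.subset_span (by simp) : g₆ ∈ I_M)

theorem isRegular_two_of_rat_algebra (A : Type*) [Semiring A] [Algebra ℚ A] :
    IsRegular (2 : A) := by
  simpa only [map_ofNat] using
    ((IsUnit.mk0 (2 : ℚ) two_ne_zero).map (algebraMap ℚ A)).isRegular

theorem vanishing_characteristics_M_general {A : Type*} [CommRing A] {a b c : A}
    (h : CompleteConicRelations a b c) (h2 : IsRegular (2 : A)) :
    a^3*b^4*c = 0 ∧ a^2*b^5*c = 0 ∧ a*b^6*c = 0 ∧ b^7*c = 0 ∧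
    a^3*b^3*c^2 = 0 ∧ a^2*b^4*c^2 = 0 ∧ a*b^5*c^2 = 0 ∧ b^6*c^2 = 0 ∧
    a*b^4*c^3 = 0 ∧ b^5*c^3 = 0 ∧ b^4*c^4 = 0 ∧ a^2*c^6 = 0 := by
  refine ⟨?_, ?_, ?_, ?_, ?_, ?_, ?_, ?_, ?_, ?_, ?_, h.a_sq_mul_c_pow_six h2⟩
  · linear_combination a^3*h.b_pow_four_mul_c
  · linear_combination a^2*b*h.b_pow_four_mul_c
  · linear_combination a*b^2*h.b_pow_four_mul_c
  · linear_combination b^3*h.b_pow_four_mul_c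
  · linear_combination c*h.a_cube_mul_b_cube_mul_c
  · linear_combination a^2*c*h.b_pow_four_mul_c
  · linear_combination a*b*c*h.b_pow_four_mul_c
  · linear_combination b^2*c*h.b_pow_four_mul_c
  · linear_combination a*c^2*h.b_pow_four_mul_c
  · linear_combination b*c^2*h.b_pow_four_mul_c
  · linear_combination c^3*h.b_pow_four_mul_c

/-- The twelve degree-16 monomials with vanishing characteristic number. -/
theorem vanishing_characteristics_M :
    x^3*y^4*z ∈ I_M ∧ x^2*y^5*z ∈ I_M ∧ x*y^6*z ∈ I_M ∧ y^7*z ∈ I_M ∧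
    x^3*y^3*z^2 ∈ I_M ∧ x^2*y^4*z^2 ∈ I_M ∧ x*y^5*z^2 ∈ I_M ∧ y^6*z^2 ∈ I_M ∧
    x*y^4*z^3 ∈ I_M ∧ y^5*z^3 ∈ I_M ∧ y^4*z^4 ∈ I_M ∧ x^2*z^6 ∈ I_M := by
  simpa only [← map_pow, ← map_mul, Ideal.Quotient.eq_zero_iff_mem] using
    vanishing_characteristics_M_general completeConicRelations_mk_I_M
      (isRegular_two_of_rat_algebra _)
end

section
/- Let I_M ⊆ ℚ[x,y,z] be the ideal generated by x⁴, g₃ = 2z³ − (6x+9y)z² + (15y²+20xy+12x²)z − 8y³ − 16xy² − 16x²y, g₄ = (y³+2xy²+4x²y+8x³)z, and g₆ = y⁶+4xy⁵+10x²y⁴+20x³y³. Then x³y²z³ − 4·x³y⁵ ∈ I_M, x³yz⁴ − 18·x³y⁵ ∈ I_M, and x³z⁵ − 51·x³y⁵ ∈ I_M. -/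
open MvPolynomial

/-!
Multiplication by `x³`, the class of a fixed plane, reduces the computation to the complete conics
of that plane: modulo the annihilator `(I_M : x³)` of this class, `x` vanishes, because `x⁴ ∈ I_M`.
What is left of `g₃` and `g₄` are the relations between the hyperplane class `y` and the exceptional
class `z` on the blow-up of the `ℙ⁵` of plane conics along the Veronese surface of double lines.
Multiplying the cubic relation by `y²`, `yz` and `z²` and using `y³z = 0` computes `y²z³`, `yz⁴` and
`z⁵` in turn as multiples of `y⁵`.
-/

/-- The relations satisfied by the hyperplane class `h` and the exceptional class `e` on the blow-up
of `ℙ⁵` along the Veronese surface. The cubic one comes from the Chern classes of the normal bundle,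
`c₁ = 9h/2` and `c₂ = 15h²/2`, and from the class `4h³` of the surface; it is multiplied by `2` so
that it makes sense in every commutative ring. -/
structure IsVeroneseBlowupPair {S : Type*} [CommRing S] (h e : S) : Prop where
  pow_three_mul : h ^ 3 * e = 0
  cubic : 2 * e ^ 3 - 9 * h * e ^ 2 + 15 * h ^ 2 * e - 8 * h ^ 3 = 0

namespace IsVeroneseBlowupPair

variable {S : Type*} [CommRing S] {h e : S}

theorem sq_mul_pow_three (two_regular : IsLeftRegular (2 : S)) (pair : IsVeroneseBlowupPair h e) :
    h ^ 2 * e ^ 3 = 4 * h ^ 5 :=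
  two_regular <| by
    linear_combination h ^ 2 * pair.cubic + (9 * e - 15 * h) * pair.pow_three_mul

theorem mul_pow_four (two_regular : IsLeftRegular (2 : S)) (pair : IsVeroneseBlowupPair h e) :
    h * e ^ 4 = 18 * h ^ 5 :=
  two_regular <| by
    linear_combination h * e * pair.cubic + (8 * h - 15 * e) * pair.pow_three_mul
      + 9 * pair.sq_mul_pow_three two_regular

theorem pow_five (two_regular : IsLeftRegular (2 : S)) (pair : IsVeroneseBlowupPair h e) :
    e ^ 5 = 51 * h ^ 5 :=
  two_regular <| by
    linear_combination e ^ 2 * pair.cubic + 8 * e * pair.pow_three_mul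
      - 15 * pair.sq_mul_pow_three two_regular + 9 * pair.mul_pow_four two_regular

end IsVeroneseBlowupPair

theorem isUnit_two_of_algebra_rat (S : Type*) [Semiring S] [Algebra ℚ S] : IsUnit (2 : S) := by
  simpa only [map_ofNat] using (IsUnit.mk0 (2 : ℚ) two_ne_zero).map (algebraMap ℚ S)

theorem mem_colon_pow_of_pow_succ_mem {R : Type*} [Semiring R] {I : Ideal R} {a : R} {n : ℕ}
    (ha : a ^ (n + 1) ∈ I) : a ∈ I.colon {a ^ n} := by
  rwa [Submodule.mem_colon_singleton, smul_eq_mul, ← pow_succ']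

theorem mul_sub_mem_iff_mk_colon_eq {R : Type*} [CommRing R] {I : Ideal R} {a p q : R} :
    a * (p - q) ∈ I ↔
      Ideal.Quotient.mk (I.colon {a}) p = Ideal.Quotient.mk (I.colon {a}) q := by
  rw [Ideal.Quotient.eq, Submodule.mem_colon_singleton, smul_eq_mul, mul_comm]

theorem x_pow_four_mem_I_M : x ^ 4 ∈ I_M := Ideal.subset_span (by simp)

theorem g₃_mem_I_M : g₃ ∈ I_M := Ideal.subset_span (by simp)

theorem g₄_mem_I_M : g₄ ∈ I_M := Ideal.subset_span (by simp)

theorem isVeroneseBlowupPair_mk {J : Ideal (MvPolynomial (Fin 3) ℚ)} (hJ : I_M ≤ J) (hx : x ∈ J) :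
    IsVeroneseBlowupPair (Ideal.Quotient.mk J y) (Ideal.Quotient.mk J z) := by
  have x_eq_zero : Ideal.Quotient.mk J x = 0 := Ideal.Quotient.eq_zero_iff_mem.mpr hx
  have g₃_eq_zero : Ideal.Quotient.mk J g₃ = 0 :=
    Ideal.Quotient.eq_zero_iff_mem.mpr (hJ g₃_mem_I_M)
  have g₄_eq_zero : Ideal.Quotient.mk J g₄ = 0 :=
    Ideal.Quotient.eq_zero_iff_mem.mpr (hJ g₄_mem_I_M)
  constructor
  · simpa [g₄, x_eq_zero] using g₄_eq_zero
  · simpa [g₃, x_eq_zero, map_ofNat] using g₃_eq_zero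

/-- `∫ x³y²z³ = 4`, `∫ x³yz⁴ = 18`, `∫ x³z⁵ = 51`. -/
theorem characteristics_M_x3 :
    x^3*y^2*z^3 - 4*(x^3*y^5) ∈ I_M ∧
    x^3*y*z^4 - 18*(x^3*y^5) ∈ I_M ∧
    x^3*z^5 - 51*(x^3*y^5) ∈ I_M := by
  have pair := isVeroneseBlowupPair_mk (J := I_M.colon {x ^ 3}) Ideal.le_colon
    (mem_colon_pow_of_pow_succ_mem x_pow_four_mem_I_M)
  have two_regular := (isUnit_two_of_algebra_rat
    (MvPolynomial (Fin 3) ℚ ⧸ I_M.colon {x ^ 3})).isRegular.left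
  have y_sq_z_cube : x ^ 3 * (y ^ 2 * z ^ 3 - 4 * y ^ 5) ∈ I_M :=
    mul_sub_mem_iff_mk_colon_eq.mpr (by simpa [map_ofNat] using pair.sq_mul_pow_three two_regular)
  have y_z_pow_four : x ^ 3 * (y * z ^ 4 - 18 * y ^ 5) ∈ I_M :=
    mul_sub_mem_iff_mk_colon_eq.mpr (by simpa [map_ofNat] using pair.mul_pow_four two_regular)
  have z_pow_five : x ^ 3 * (z ^ 5 - 51 * y ^ 5) ∈ I_M :=
    mul_sub_mem_iff_mk_colon_eq.mpr (by simpa [map_ofNat] using pair.pow_five two_regular)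
  refine ⟨?_, ?_, ?_⟩
  · convert y_sq_z_cube using 1; ring
  · convert y_z_pow_four using 1; ring
  · convert z_pow_five using 1; ring
end
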